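/- Let n ≥ 2. For any two transpositions σ = (i j) and ρ = (k l) in S_n with {i,j} ∩ {k,l} = ∅, one has c(σ, ρ) + c(ρ, σ) = 1 in Z/2Z. -/

import Mathlib

open Equiv
open scoped Classical

/-- Generator `z` as an element of the free group. -/
def zF (n : ℕ) : FreeGroup (Fin (n-1) ⊕ Unit) := FreeGroup.of (Sum.inr ())

/-- Generator `τ̃ᵢ` as an element of the free group. -/
def tF (n : ℕ) (i : Fin (n-1)) : FreeGroup (Fin (n-1) ⊕ Unit) := FreeGroup.of (Sum.inl i)

/-- Relations of the spin extension of the symmetric group. -/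
def spinRels (n : ℕ) : Set (FreeGroup (Fin (n-1) ⊕ Unit)) :=
  {zF n * zF n} ∪
  {w | ∃ i : Fin (n-1), w = zF n * tF n i * (tF n i * zF n)⁻¹} ∪
  {w | ∃ i : Fin (n-1), w = tF n i * tF n i * (zF n)⁻¹} ∪
  {w | ∃ i j : Fin (n-1), 1 < |(i : ℤ) - (j : ℤ)| ∧ w = tF n i * tF n j * (zF n * tF n j * tF n i)⁻¹} ∪
  {w | ∃ i j : Fin (n-1), (j : ℕ) = (i : ℕ) + 1 ∧
        w = tF n i * tF n j * tF n i * (tF n j * tF n i * tF n j)⁻¹}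

/-- The spin extension `S̃ₙ` of the symmetric group, as a presented group. -/
abbrev SpinSym (n : ℕ) := PresentedGroup (spinRels n)

/-- The central element `z` of `S̃ₙ`. -/
def zt (n : ℕ) : SpinSym n := PresentedGroup.of (Sum.inr ())

/-- The generator `τ̃ᵢ` of `S̃ₙ`. -/
def tt (n : ℕ) (i : Fin (n-1)) : SpinSym n := PresentedGroup.of (Sum.inl i)

/-- `i` as an element of `Fin n`. -/
def finL (n : ℕ) (i : Fin (n-1)) : Fin n := ⟨i, by have := i.2; omega⟩

/-- `i+1` as an element of `Fin n`. -/
def finR (n : ℕ) (i : Fin (n-1)) : Fin n := ⟨(i : ℕ) + 1, by have := i.2; omega⟩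

/-- `τ̃ₖ` for a natural number index, `1` out of range. -/
def ttN (n : ℕ) (k : ℕ) : SpinSym n := if h : k < n - 1 then tt n ⟨k, h⟩ else 1

/-- For `i ≤ j`, the word `τ̃ᵢ·τ̃ᵢ₊₁⋯τ̃ⱼ₋₂·τ̃ⱼ₋₁·τ̃ⱼ₋₂⋯τ̃ᵢ₊₁·τ̃ᵢ` (equal to `1` when `i = j`). -/
def ttilCore (n i j : ℕ) : SpinSym n :=
  (((List.range' i (j - i)) ++ (List.range' i (j - 1 - i)).reverse).map (ttN n)).prod

/-- The lifted transpositions `τ̃_{i,j}`, with `τ̃_{j,i} = z·τ̃_{i,j}` for `i < j`,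
and `τ̃_{k,k} = 1`. -/
def ttil (n i j : ℕ) : SpinSym n := if j < i then zt n * ttilCore n j i else ttilCore n i j

/-- `i` is the sequence of indices of a factorization of `x` as a product of
transpositions `t_{i_0,0} ⋯ t_{i_{n-1},n-1}` with `i_k ≤ k`. -/
def IsFactorization (n : ℕ) (x : Equiv.Perm (Fin n)) (i : Fin n → Fin n) : Prop :=
  (∀ k, i k ≤ k) ∧ x = ((List.finRange n).map (fun k => Equiv.swap (i k) k)).prod

/-- The section `s : Sₙ → S̃ₙ`, defined from the unique factorization
`x = t_{i_0,0} ⋯ t_{i_{n-1},n-1}` by `s x = τ̃_{i_0,0} ⋯ τ̃_{i_{n-1},n-1}`. -/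
noncomputable def sec (n : ℕ) (x : Equiv.Perm (Fin n)) : SpinSym n :=
  if h : ∃ i, IsFactorization n x i then
    ((List.finRange n).map (fun k => ttil n (h.choose k).val k.val)).prod
  else 1

/-- The `2`-cocycle `c : Sₙ × Sₙ → ℤ/2ℤ` defined by `s(x)·s(y) = z^{c(x,y)}·s(x·y)`. -/
noncomputable def coc (n : ℕ) (x y : Equiv.Perm (Fin n)) : ZMod 2 :=
  if sec n x * sec n y = sec n (x * y) then 0 else 1

/-! The kernel `⟨z⟩` of `S̃ₙ → Sₙ` is detected by a Clifford algebra. For the form `-½ ∑ xₘ²` the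
roots `e_a - e_b` square to `-1`, roots with disjoint indices anticommute, and consecutive roots
satisfy the braid relation, so `τ̃ᵢ ↦ e_i - e_{i+1}`, `z ↦ -1` is a representation of `S̃ₙ`. It
sends `τ̃_{i,j}` to `e_i - e_j`; hence lifted transpositions with disjoint indices do not commute.
On the other hand, for `i < j`, `k < l` and `j < l` the product `(i j)(k l)` is already in the
normal form that defines `s`, so `s((i j)(k l)) = s(i j) s(k l)`: of the two cocycle values the
first vanishes and the second does not. -/

section CliffordRoots

/-- The quadratic form `-½ ∑ xₘ²`, whose scaling gives the roots `e_a - e_b` the value `-1`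
without a normalizing factor `1/√2`. -/
def rootForm (α : Type*) [Fintype α] : QuadraticForm ℚ (α → ℚ) :=
  QuadraticMap.weightedSumSquares ℚ fun _ => (-1 / 2 : ℚ)

theorem rootForm_apply {α : Type*} [Fintype α] (x : α → ℚ) : rootForm α x = -(x ⬝ᵥ x) / 2 := by
  simp only [rootForm, QuadraticMap.weightedSumSquares_apply, smul_eq_mul, ← Finset.mul_sum,
    dotProduct]
  ring

theorem polar_rootForm {α : Type*} [Fintype α] (x y : α → ℚ) :
    QuadraticMap.polar (rootForm α) x y = -(x ⬝ᵥ y) := by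
  simp only [QuadraticMap.polar, rootForm_apply, add_dotProduct, dotProduct_add,
    dotProduct_comm y x]
  ring

variable {α : Type*} [DecidableEq α]

/-- The root `e_a - e_b` of type `A`. -/
def rootVec (a b : α) : α → ℚ := Pi.single a 1 - Pi.single b 1

theorem rootVec_add_rootVec (a b c : α) : rootVec a b + rootVec b c = rootVec a c :=
  sub_add_sub_cancel _ _ _

theorem neg_rootVec (a b : α) : -rootVec a b = rootVec b a :=
  neg_sub _ _

variable [Fintype α] {a b c d : α}

theorem rootForm_rootVec (hab : a ≠ b) : rootForm α (rootVec a b) = -1 := by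
  norm_num [rootForm_apply, rootVec, sub_dotProduct, hab, hab.symm]

theorem polar_rootVec_of_adjacent (hab : a ≠ b) (hac : a ≠ c) (hbc : b ≠ c) :
    QuadraticMap.polar (rootForm α) (rootVec a b) (rootVec b c) = 1 := by
  simp [polar_rootForm, -QuadraticMap.polar_self, rootVec, hab, hac, hbc]

theorem isOrtho_rootVec_of_disjoint (hac : a ≠ c) (had : a ≠ d) (hbc : b ≠ c) (hbd : b ≠ d) :
    (rootForm α).IsOrtho (rootVec a b) (rootVec c d) :=
  QuadraticMap.isOrtho_polarBilin.mp <| by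
    simp [polar_rootForm, rootVec, hac, had, hbc, hbd]

/-- The root `e_a - e_b` as an element of the Clifford algebra of `rootForm`; it is the image of
`τ̃_{a,b}` in the spin representation. -/
def cliffRoot (a b : α) : CliffordAlgebra (rootForm α) := CliffordAlgebra.ι _ (rootVec a b)

theorem neg_cliffRoot (a b : α) : -cliffRoot a b = cliffRoot b a := by
  rw [cliffRoot, ← map_neg, neg_rootVec, cliffRoot]

theorem cliffRoot_mul_self (hab : a ≠ b) : cliffRoot a b * cliffRoot a b = -1 := by
  rw [cliffRoot, CliffordAlgebra.ι_sq_scalar, rootForm_rootVec hab, map_neg, map_one]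

theorem cliffRoot_anticomm_of_disjoint (hac : a ≠ c) (had : a ≠ d) (hbc : b ≠ c)
    (hbd : b ≠ d) : cliffRoot a b * cliffRoot c d = -(cliffRoot c d * cliffRoot a b) :=
  CliffordAlgebra.ι_mul_ι_comm_of_isOrtho (isOrtho_rootVec_of_disjoint hac had hbc hbd)

theorem cliffRoot_conj (hab : a ≠ b) (hac : a ≠ c) (hbc : b ≠ c) :
    cliffRoot a b * cliffRoot b c * cliffRoot a b = cliffRoot a c := by
  simp only [cliffRoot]
  rw [CliffordAlgebra.ι_mul_ι_mul_ι, polar_rootVec_of_adjacent hab hac hbc, rootForm_rootVec hab,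
    one_smul, neg_one_smul, sub_neg_eq_add, rootVec_add_rootVec]

theorem cliffRoot_braid (hab : a ≠ b) (hac : a ≠ c) (hbc : b ≠ c) :
    cliffRoot a b * cliffRoot b c * cliffRoot a b =
      cliffRoot b c * cliffRoot a b * cliffRoot b c := by
  have reversed := cliffRoot_conj hbc.symm hac.symm hab.symm
  simp only [← neg_cliffRoot b c, ← neg_cliffRoot a b, ← neg_cliffRoot a c, neg_mul, mul_neg,
    neg_neg, neg_inj] at reversed
  rw [cliffRoot_conj hab hac hbc, reversed]

/-- The root `e_a - e_b` as a unit of the Clifford algebra, with inverse `e_b - e_a`. -/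
def cliffRootUnit (hab : a ≠ b) : (CliffordAlgebra (rootForm α))ˣ where
  val := cliffRoot a b
  inv := cliffRoot b a
  val_inv := by rw [← neg_cliffRoot a b, mul_neg, cliffRoot_mul_self hab, neg_neg]
  inv_val := by rw [← neg_cliffRoot a b, neg_mul, cliffRoot_mul_self hab, neg_neg]

theorem cliffRoot_mul_ne_of_disjoint (hab : a ≠ b) (hcd : c ≠ d) (hac : a ≠ c) (had : a ≠ d)
    (hbc : b ≠ c) (hbd : b ≠ d) :
    cliffRoot a b * cliffRoot c d ≠ cliffRoot c d * cliffRoot a b := by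
  intro hcomm
  have : IsAddTorsionFree (CliffordAlgebra (rootForm α)) := .of_module_rat _
  refine (cliffRootUnit hcd * cliffRootUnit hab).ne_zero (self_eq_neg.mp ?_)
  exact hcomm.symm.trans (cliffRoot_anticomm_of_disjoint hac had hbc hbd)

end CliffordRoots

section SpinRepresentation

variable {n : ℕ}

theorem finL_ne_finR (i : Fin (n - 1)) : finL n i ≠ finR n i := by
  simp [finL, finR, Fin.ext_iff]

/-- The images `e_i - e_{i+1}` of `τ̃ᵢ` and `-1` of `z` under the spin representation. -/
def spinGen (n : ℕ) : Fin (n - 1) ⊕ Unit → (CliffordAlgebra (rootForm (Fin n)))ˣ :=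
  Sum.elim (fun i => cliffRootUnit (finL_ne_finR i)) fun _ => -1

theorem lift_spinGen_eq_one : ∀ w ∈ spinRels n, FreeGroup.lift (spinGen n) w = 1 := by
  rintro w ((((rfl | ⟨i, rfl⟩) | ⟨i, rfl⟩) | ⟨i, j, hij, rfl⟩) | ⟨i, j, hij, rfl⟩)
  all_goals
    simp only [zF, tF, map_mul, map_inv, FreeGroup.lift_apply_of, mul_inv_eq_one, spinGen,
      Sum.elim_inl, Sum.elim_inr]
  · rw [neg_mul_neg, one_mul]
  · exact (Commute.neg_one_left _).eq
  · exact Units.ext (cliffRoot_mul_self (finL_ne_finR i))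
  · have hdist := lt_abs.mp hij
    rw [neg_one_mul, neg_mul]
    refine Units.ext (cliffRoot_anticomm_of_disjoint ?_ ?_ ?_ ?_) <;>
      simp only [finL, finR, ne_eq, Fin.ext_iff] <;> omega
  · have hadj : finL n j = finR n i := Fin.ext hij
    have hLR : finL n i ≠ finR n j := by simp only [finL, finR, ne_eq, Fin.ext_iff]; omega
    have hRR : finR n i ≠ finR n j := by simp only [finR, ne_eq, Fin.ext_iff]; omega
    ext
    simpa only [cliffRootUnit, Units.val_mul, hadj] using
      cliffRoot_braid (finL_ne_finR i) hLR hRR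

/-- The spin representation of `S̃ₙ` in the Clifford algebra of `rootForm`. -/
def spinRep (n : ℕ) : SpinSym n →* (CliffordAlgebra (rootForm (Fin n)))ˣ :=
  PresentedGroup.toGroup lift_spinGen_eq_one

theorem spinRep_zt : spinRep n (zt n) = -1 :=
  PresentedGroup.toGroup.of _

theorem spinRep_ttN {k : ℕ} (hk : k + 1 < n) :
    (spinRep n (ttN n k) : CliffordAlgebra (rootForm (Fin n))) =
      cliffRoot ⟨k, by omega⟩ ⟨k + 1, hk⟩ := by
  rw [ttN, dif_pos (by omega), tt, spinRep, PresentedGroup.toGroup.of]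
  rfl

theorem ttilCore_succ (n i : ℕ) : ttilCore n i (i + 1) = ttN n i := by
  simp [ttilCore]

theorem ttilCore_eq_conj {i j : ℕ} (h : i + 1 < j) :
    ttilCore n i j = ttN n i * ttilCore n (i + 1) j * ttN n i := by
  have hlen : j - i = (j - (i + 1)) + 1 := by omega
  have hlen' : j - 1 - i = (j - 1 - (i + 1)) + 1 := by omega
  simp [ttilCore, hlen, hlen', List.range'_succ, mul_assoc]

theorem spinRep_ttilCore {i j : ℕ} (hij : i < j) (hj : j < n) :
    (spinRep n (ttilCore n i j) : CliffordAlgebra (rootForm (Fin n))) =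
      cliffRoot ⟨i, hij.trans hj⟩ ⟨j, hj⟩ := by
  induction hd : j - (i + 1) generalizing i with
  | zero =>
    obtain rfl : j = i + 1 := by omega
    rw [ttilCore_succ, spinRep_ttN hj]
  | succ d ih =>
    have h : i + 1 < j := by omega
    rw [ttilCore_eq_conj h, map_mul, map_mul, Units.val_mul, Units.val_mul,
      spinRep_ttN (by omega), ih h (by omega)]
    apply cliffRoot_conj <;> simp only [ne_eq, Fin.ext_iff] <;> omega

theorem spinRep_ttil {i j : Fin n} (hij : i ≠ j) :
    (spinRep n (ttil n i j) : CliffordAlgebra (rootForm (Fin n))) = cliffRoot i j := by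
  rcases hij.lt_or_gt with h | h
  · rw [ttil, if_neg (by simpa using h.le), spinRep_ttilCore h j.isLt]
  · rw [ttil, if_pos (Fin.lt_def.mp h), map_mul, spinRep_zt, neg_one_mul, Units.val_neg,
      spinRep_ttilCore h i.isLt, neg_cliffRoot]

theorem not_commute_ttil_of_disjoint {i j k l : Fin n} (hij : i ≠ j) (hkl : k ≠ l) (hik : i ≠ k)
    (hil : i ≠ l) (hjk : j ≠ k) (hjl : j ≠ l) : ¬Commute (ttil n i j) (ttil n k l) := by
  intro hcomm
  have himage := congrArg Units.val (hcomm.map (spinRep n)).eq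
  simp only [Units.val_mul, spinRep_ttil hij, spinRep_ttil hkl] at himage
  exact cliffRoot_mul_ne_of_disjoint hij hkl hik hil hjk hjl himage

end SpinRepresentation

section Factorization

theorem prod_map_eq_of_sublist {α M : Type*} [Monoid M] {F : α → M} {L L' : List α}
    (h : L.Sublist L') (hL' : L'.Nodup) (hF : ∀ a ∈ L', a ∉ L → F a = 1) :
    (L'.map F).prod = (L.map F).prod := by
  induction h with
  | slnil => rfl
  | cons a h ih =>
    rw [List.nodup_cons] at hL'
    rw [List.forall_mem_cons] at hF
    rw [List.map_cons, List.prod_cons, hF.1 fun ha => hL'.1 (h.subset ha), one_mul, ih hL'.2 hF.2]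
  | @cons_cons l l' a _ ih =>
    rw [List.nodup_cons] at hL'
    have hF' : ∀ b ∈ l', b ∉ l → F b = 1 := fun b hb hbL => hF b (List.mem_cons_of_mem a hb) <|
      List.not_mem_cons_of_ne_of_not_mem (ne_of_mem_of_not_mem hb hL'.1) hbL
    rw [List.map_cons, List.prod_cons, List.map_cons, List.prod_cons, ih hL'.2 hF']

variable {α : Type*} [LinearOrder α] {f g : α → α}

theorem prod_swap_apply_of_forall_lt {L : List α} {k : α} (hf : ∀ a, f a ≤ a)
    (hL : ∀ a ∈ L, a < k) : (L.map fun a => swap (f a) a).prod k = k := by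
  induction L with
  | nil => rfl
  | cons a L ih =>
    rw [List.forall_mem_cons] at hL
    rw [List.map_cons, List.prod_cons, Perm.mul_apply, ih hL.2]
    exact swap_apply_of_ne_of_ne ((hf a).trans_lt hL.1).ne' hL.1.ne'

theorem prod_swap_mul_swap_apply_of_forall_lt {L : List α} {k : α} (hf : ∀ a, f a ≤ a)
    (hL : ∀ a ∈ L, a < k) : ((L.map fun a => swap (f a) a).prod * swap (f k) k) (f k) = k := by
  rw [Perm.mul_apply, swap_apply_left, prod_swap_apply_of_forall_lt hf hL]

theorem eq_of_prod_swap_eq {L : List α} (hf : ∀ a, f a ≤ a) (hg : ∀ a, g a ≤ a)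
    (hL : L.Pairwise (· < ·))
    (h : (L.map fun a => swap (f a) a).prod = (L.map fun a => swap (g a) a).prod) :
    ∀ a ∈ L, f a = g a := by
  induction L using List.reverseRecOn with
  | nil => simp
  | append_singleton L k ih =>
    obtain ⟨hL', -, hlt⟩ := List.pairwise_append.mp hL
    have hk : ∀ a ∈ L, a < k := fun a ha => hlt a ha k (List.mem_singleton_self k)
    simp only [List.map_append, List.map_cons, List.map_nil, List.prod_append,
      List.prod_singleton] at h
    -- `f k` and `g k` are both the preimage of the largest index `k`.
    have hfg : f k = g k := by
      apply Equiv.injective ((L.map fun a => swap (f a) a).prod * swap (f k) k)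
      rw [prod_swap_mul_swap_apply_of_forall_lt hf hk, h,
        prod_swap_mul_swap_apply_of_forall_lt hg hk]
    rw [hfg, mul_left_inj] at h
    simpa [or_imp, forall_and, hfg] using ih hL' h

end Factorization

section Cocycle

variable {n : ℕ}

theorem IsFactorization.unique {x : Perm (Fin n)} {f g : Fin n → Fin n}
    (hf : IsFactorization n x f) (hg : IsFactorization n x g) : f = g :=
  funext fun a => eq_of_prod_swap_eq hf.1 hg.1 (List.pairwise_lt_finRange n)
    (hf.2.symm.trans hg.2) a (List.mem_finRange a)

theorem IsFactorization.sec_eq {x : Perm (Fin n)} {f : Fin n → Fin n}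
    (hf : IsFactorization n x f) :
    sec n x = ((List.finRange n).map fun k => ttil n (f k) k).prod := by
  have h : ∃ f, IsFactorization n x f := ⟨f, hf⟩
  rw [sec, dif_pos h, h.choose_spec.unique hf]

theorem ttil_self (n i : ℕ) : ttil n i i = 1 := by
  simp [ttil, ttilCore]

theorem sec_prod_swap {L : List (Fin n)} (hL : L.SortedLT) {f : Fin n → Fin n}
    (hf : ∀ k ∈ L, f k ≤ k) :
    sec n (L.map fun k => swap (f k) k).prod = (L.map fun k => ttil n (f k) k).prod := by
  let g : Fin n → Fin n := fun k => if k ∈ L then f k else k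
  have prod_g {M : Type} [Monoid M] (F : Fin n → Fin n → M) (hF : ∀ k, F k k = 1) :
      ((List.finRange n).map fun k => F (g k) k).prod = (L.map fun k => F (f k) k).prod := by
    have hsub : L.Sublist (List.finRange n) := List.sublist_of_subperm_of_sortedLE
      (List.subperm_of_subset hL.nodup fun k _ => List.mem_finRange k) hL.sortedLE
      (List.sortedLT_finRange n).sortedLE
    rw [prod_map_eq_of_sublist hsub (List.nodup_finRange n) fun k _ hk => by simp [g, hk, hF]]
    exact congrArg _ (List.map_congr_left fun k hk => by simp [g, hk])
  have hg : IsFactorization n (L.map fun k => swap (f k) k).prod g := by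
    refine ⟨fun k => ?_, (prod_g swap swap_self).symm⟩
    by_cases hk : k ∈ L
    · simpa [g, hk] using hf k hk
    · simp [g, hk]
  rw [hg.sec_eq, prod_g (fun a b => ttil n a b) fun k => ttil_self n k]

theorem sec_swap {i j : Fin n} (hij : i ≤ j) : sec n (swap i j) = ttil n i j := by
  simpa using sec_prod_swap (L := [j]) (by simp [List.sortedLT_iff_pairwise]) (f := fun _ => i)
    (by simpa using hij)

theorem sec_swap_mul_swap {i j k l : Fin n} (hij : i ≤ j) (hkl : k ≤ l) (hjl : j < l) :
    sec n (swap i j * swap k l) = ttil n i j * ttil n k l := by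
  have hsorted : [j, l].SortedLT := by simpa [List.sortedLT_iff_pairwise] using hjl
  simpa [hjl.ne'] using sec_prod_swap hsorted (f := Function.update (fun _ => k) j i)
    (by simp [hij, hkl, hjl.ne'])

theorem coc_add_coc_of_lt {i j k l : Fin n} (hij : i < j) (hkl : k < l) (hjl : j < l)
    (hik : i ≠ k) (hjk : j ≠ k) :
    coc n (swap i j) (swap k l) + coc n (swap k l) (swap i j) = 1 := by
  have hil : i ≠ l := (hij.trans hjl).ne
  have hcomm : swap k l * swap i j = swap i j * swap k l :=
    (Perm.disjoint_swap_swap (by simp [hij.ne, hkl.ne, hik, hil, hjk, hjl.ne])).commute.symm.eq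
  have hlift : ttil n k l * ttil n i j ≠ ttil n i j * ttil n k l := fun h =>
    not_commute_ttil_of_disjoint hij.ne hkl.ne hik hil hjk hjl.ne h.symm
  rw [coc, coc, hcomm, sec_swap_mul_swap hij.le hkl.le hjl, sec_swap hij.le, sec_swap hkl.le,
    if_pos rfl, if_neg hlift, zero_add]

end Cocycle

theorem cocycle_disjoint_transpositions (n : ℕ) (hn : 2 ≤ n) (i j k l : Fin n)
    (hij : i ≠ j) (hkl : k ≠ l)
    (hik : i ≠ k) (hil : i ≠ l) (hjk : j ≠ k) (hjl : j ≠ l) :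
    coc n (Equiv.swap i j) (Equiv.swap k l) + coc n (Equiv.swap k l) (Equiv.swap i j) = 1 := by
  wlog hij_lt : i < j generalizing i j
  · rw [swap_comm i j]
    exact this j i hij.symm hjk hjl hik hil (hij.lt_or_gt.resolve_left hij_lt)
  wlog hkl_lt : k < l generalizing k l
  · rw [swap_comm k l]
    exact this l k hkl.symm hil hik hjl hjk (hkl.lt_or_gt.resolve_left hkl_lt)
  rcases hjl.lt_or_gt with hjl_lt | hlj_lt
  · exact coc_add_coc_of_lt hij_lt hkl_lt hjl_lt hik hjk
  · rw [add_comm]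
    exact coc_add_coc_of_lt hkl_lt hij_lt hlj_lt hik.symm hil.symm
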